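/- arXiv:2303.13687 — 2 statements merged into one kernel-verified Lean document; each statement's English description precedes it below -/
import Mathlib

section
/- Let I be the ideal of R = ℚ[x,y,z] generated by z³, y³, x³, xyz², xy²z. Then I has height 3, the minimal number of generators of I is 5, and the quotient ring R/I is a finite-dimensional ℚ-vector space. -/
/-!
Every prime containing `I` contains the three variables, hence contains the kernel of evaluation at
the origin. It lies above the chain of kernels of the substitutions killing no variable, `x`, and
`x, y`, so its height is at least `3`, and it is at most `3 = dim ℚ[x,y,z]`. Since each variable is
nilpotent modulo `I`, the quotient is an integral `ℚ`-algebra of finite type, hence finite.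

For the number of generators, the five generators of `I` are monomials with pairwise incomparable
exponents `genExp i`. Reading off the coefficients at these exponents is a linear map
`genCoeff : ℚ[x,y,z] → ℚ⁵` with `genCoeff (r f) = r(0) genCoeff f` for `f ∈ I`
(`genCoeff_mul`): it is the reduction `I → I / 𝔪 I`. So any generating set of `I` is sent to a
spanning set of `ℚ⁵`.
-/

open MvPolynomial

/-- The height of an ideal: the infimum of the heights of prime ideals containing it. -/
noncomputable def idealHeight {R : Type*} [CommRing R] (I : Ideal R) : ℕ∞ :=
  ⨅ p ∈ {p : PrimeSpectrum R | I ≤ p.asIdeal}, Order.height p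

/-- The minimal number of generators of an ideal: the smallest cardinality of a
set of elements of the ring generating it as an ideal. -/
noncomputable def minNumGens {R : Type*} [CommRing R] (I : Ideal R) : ℕ :=
  sInf {n : ℕ | ∃ s : Finset R, s.card = n ∧ Ideal.span (s : Set R) = I}

noncomputable abbrev x : MvPolynomial (Fin 3) ℚ := X 0
noncomputable abbrev y : MvPolynomial (Fin 3) ℚ := X 1
noncomputable abbrev z : MvPolynomial (Fin 3) ℚ := X 2

/-- Exponents of the five monomial generators `z³, y³, x³, xyz², xy²z`. -/
noncomputable def genExp (i : Fin 5) : Fin 3 →₀ ℕ :=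
  Finsupp.equivFunOnFinite.symm
    ((![![0, 0, 3], ![0, 3, 0], ![3, 0, 0], ![1, 1, 2], ![1, 2, 1]] : Fin 5 → Fin 3 → ℕ) i)

lemma genExp_antichain (i j : Fin 5) (h : genExp i ≤ genExp j) : i = j := by
  have h' : ∀ k, genExp i k ≤ genExp j k := h
  simp only [genExp, Finsupp.equivFunOnFinite_symm_apply_apply] at h'
  clear h
  revert i j
  decide

lemma span_gens_eq :
    (Ideal.span {z^3, y^3, x^3, x*y*z^2, x*y^2*z} : Ideal (MvPolynomial (Fin 3) ℚ)) =
      Ideal.span ((fun s => monomial s (1 : ℚ)) '' Set.range genExp) := by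
  have key : ∀ i, monomial (genExp i) (1 : ℚ) =
      x ^ (genExp i 0) * y ^ (genExp i 1) * z ^ (genExp i 2) := by
    intro i
    rw [monomial_eq, Finsupp.prod_fintype _ _ (by simp)]
    simp [Fin.prod_univ_three]
  congr 1
  rw [← Set.range_comp]
  ext f
  simp only [Set.mem_insert_iff, Set.mem_singleton_iff, Set.mem_range, Function.comp_apply, key]
  simp [genExp, eq_comm, Fin.exists_fin_succ]

/-- The coefficients of a polynomial at the exponents of the five generators. -/
noncomputable def genCoeff : MvPolynomial (Fin 3) ℚ →ₗ[ℚ] (Fin 5 → ℚ) :=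
  LinearMap.pi fun i => lcoeff ℚ (genExp i)

lemma genCoeff_apply (f : MvPolynomial (Fin 3) ℚ) (i : Fin 5) :
    genCoeff f i = coeff (genExp i) f := rfl

/-- On the ideal, `genCoeff` factors through reduction modulo the ideal of the origin: a proper
divisor of a generating monomial never occurs in an element of the ideal. -/
lemma genCoeff_mul (r f : MvPolynomial (Fin 3) ℚ)
    (hf : f ∈ Ideal.span ((fun s => monomial s (1 : ℚ)) '' Set.range genExp)) :
    genCoeff (r * f) = coeff 0 r • genCoeff f := by
  rw [mem_ideal_span_monomial_image] at hf
  ext i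
  rw [Pi.smul_apply, genCoeff_apply, genCoeff_apply, coeff_mul, smul_eq_mul]
  refine Finset.sum_eq_single (0, genExp i) ?_ (by simp)
  rintro ⟨a, b⟩ hab hne
  rw [Finset.HasAntidiagonal.mem_antidiagonal] at hab
  dsimp only at hab ⊢
  by_contra h
  obtain ⟨_, ⟨j, rfl⟩, hj⟩ := hf b (mem_support_iff.2 (right_ne_zero_of_mul h))
  have hbi : b ≤ genExp i := hab ▸ le_add_self
  obtain rfl := genExp_antichain j i (hj.trans hbi)
  obtain rfl := le_antisymm hj hbi
  exact hne (by simpa using hab)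

lemma five_le_card (s : Finset (MvPolynomial (Fin 3) ℚ))
    (hs : Ideal.span (s : Set (MvPolynomial (Fin 3) ℚ)) =
      Ideal.span ((fun s => monomial s (1 : ℚ)) '' Set.range genExp)) : 5 ≤ s.card := by
  classical
  have h1 : ∀ f ∈ Ideal.span (s : Set (MvPolynomial (Fin 3) ℚ)),
      genCoeff f ∈ Submodule.span ℚ ((s.image genCoeff : Finset _) : Set (Fin 5 → ℚ)) := by
    intro f hf
    induction hf using Submodule.span_induction with
    | mem f hf => exact Submodule.subset_span (by simpa using ⟨f, hf, rfl⟩)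
    | zero => simp
    | add f g _ _ h h' => rw [map_add]; exact add_mem h h'
    | smul r f hf h =>
      rw [smul_eq_mul, genCoeff_mul r f (hs ▸ hf)]
      exact Submodule.smul_mem _ _ h
  have h2 : Submodule.span ℚ ((s.image genCoeff : Finset _) : Set (Fin 5 → ℚ)) = ⊤ := by
    rw [eq_top_iff, ← (Pi.basisFun ℚ (Fin 5)).span_eq, Submodule.span_le]
    rintro _ ⟨i, rfl⟩
    have := h1 (monomial (genExp i) 1)
      (hs ▸ Ideal.subset_span ⟨_, ⟨i, rfl⟩, rfl⟩)
    suffices h : Pi.basisFun ℚ (Fin 5) i = genCoeff (monomial (genExp i) 1) from h ▸ this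
    ext j
    rw [genCoeff_apply, coeff_monomial, Pi.basisFun_apply, Pi.single_apply]
    refine if_congr ⟨fun h => h ▸ rfl, fun h => (genExp_antichain _ _ h.le).symm⟩ rfl rfl
  have h3 := finrank_span_finset_le_card (R := ℚ) (s.image genCoeff)
  rw [Set.finrank, h2, finrank_top, Module.finrank_fin_fun] at h3
  exact h3.trans Finset.card_image_le

/-- The kernel of the substitution `X i ↦ v i`, as a point of the spectrum. -/
noncomputable def kerPoint (v : Fin 3 → MvPolynomial (Fin 3) ℚ) :
    PrimeSpectrum (MvPolynomial (Fin 3) ℚ) :=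
  ⟨RingHom.ker (aeval v : MvPolynomial (Fin 3) ℚ →ₐ[ℚ] _), RingHom.ker_isPrime _⟩

/-- If `X i` and `v i` agree modulo `p`, then the kernel of `X i ↦ v i` lies in `p`. -/
lemma kerPoint_le (v : Fin 3 → MvPolynomial (Fin 3) ℚ) (p : PrimeSpectrum (MvPolynomial (Fin 3) ℚ))
    (h : ∀ i, X i - v i ∈ p.asIdeal) : kerPoint v ≤ p := by
  intro f (hf : aeval v f = 0)
  have : (Ideal.Quotient.mkₐ ℚ p.asIdeal).comp (aeval v) = Ideal.Quotient.mkₐ ℚ p.asIdeal := by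
    ext i
    simpa using (Ideal.Quotient.eq.2 (h i)).symm
  have h2 := DFunLike.congr_fun this f
  rw [AlgHom.comp_apply, hf, map_zero] at h2
  exact Ideal.Quotient.eq_zero_iff_mem.1 h2.symm

lemma kerPoint_lt (v : Fin 3 → MvPolynomial (Fin 3) ℚ) (p : PrimeSpectrum (MvPolynomial (Fin 3) ℚ))
    (h : ∀ i, X i - v i ∈ p.asIdeal) (i : Fin 3) (hi : X i ∈ p.asIdeal) (hv : v i ≠ 0) :
    kerPoint v < p := by
  refine lt_of_le_of_ne (kerPoint_le v p h) ?_
  rintro rfl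
  exact hv (by simpa [kerPoint] using hi)

lemma height_eq_three (p : PrimeSpectrum (MvPolynomial (Fin 3) ℚ))
    (h : ∀ i, X i ∈ p.asIdeal) : Order.height p = 3 := by
  apply le_antisymm
  · have h1 := Order.height_le_krullDim p
    have h2 : Order.krullDim (PrimeSpectrum (MvPolynomial (Fin 3) ℚ)) = 3 := by
      have := MvPolynomial.ringKrullDim_of_isNoetherianRing (R := ℚ) (ι := Fin 3)
      rw [ringKrullDim_eq_zero_of_field] at this
      simpa [ringKrullDim] using this
    rw [h2] at h1
    exact WithBot.coe_le_coe.1 h1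
  · have l1 : kerPoint ![X 0, X 1, X 2] < kerPoint ![0, X 1, X 2] := by
      refine kerPoint_lt _ _ ?_ 0 (by simp [kerPoint]) (by simp)
      intro i; fin_cases i <;> simp [kerPoint]
    have l2 : kerPoint ![0, X 1, X 2] < kerPoint ![0, 0, X 2] := by
      refine kerPoint_lt _ _ ?_ 1 (by simp [kerPoint]) (by simp)
      intro i; fin_cases i <;> simp [kerPoint]
    have l3 : kerPoint ![0, 0, X 2] < p := by
      refine kerPoint_lt _ _ ?_ 2 (h 2) (by simp)
      intro i; fin_cases i <;> simp [h]
    have a1 := Order.height_add_one_le l1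
    have a2 := Order.height_add_one_le l2
    have a3 := Order.height_add_one_le l3
    calc (3 : ℕ∞) = 0 + 1 + 1 + 1 := by norm_num
      _ ≤ Order.height (kerPoint ![X 0, X 1, X 2]) + 1 + 1 + 1 := by gcongr; exact zero_le
      _ ≤ Order.height (kerPoint ![0, X 1, X 2]) + 1 + 1 := by gcongr
      _ ≤ Order.height (kerPoint ![0, 0, X 2]) + 1 := by gcongr
      _ ≤ _ := a3

theorem stmt_3 (I : Ideal (MvPolynomial (Fin 3) ℚ))
    (hI : I = Ideal.span {z^3, y^3, x^3, x*y*z^2, x*y^2*z}) :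
    idealHeight I = 3 ∧ minNumGens I = 5 ∧
    FiniteDimensional ℚ (MvPolynomial (Fin 3) ℚ ⧸ I) := by
  have hX : ∀ i : Fin 3, (X i : MvPolynomial (Fin 3) ℚ) ^ 3 ∈ I := by
    intro i
    rw [hI]
    apply Ideal.subset_span
    fin_cases i <;> simp
  refine ⟨?_, ?_, ?_⟩
  · apply le_antisymm
    · refine (iInf₂_le (kerPoint 0) ?_).trans (height_eq_three _ ?_).le
      · rw [hI, Set.mem_ofPred_eq, Ideal.span_le]
        rintro f (rfl | rfl | rfl | rfl | rfl) <;> simp [kerPoint]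
      · simp [kerPoint]
    · refine le_iInf₂ fun p hp => (height_eq_three p fun i => ?_).ge
      exact p.isPrime.mem_of_pow_mem 3 (hp (hX i))
  · apply le_antisymm
    · classical
      refine le_trans (Nat.sInf_le ?_) (Finset.card_le_five
        (a := z^3) (b := y^3) (c := x^3) (d := x*y*z^2) (e := x*y^2*z))
      exact ⟨_, rfl, by rw [hI]; simp⟩
    · refine le_csInf ⟨_, {z^3, y^3, x^3, x*y*z^2, x*y^2*z}, rfl, by rw [hI]; simp⟩ ?_
      rintro _ ⟨s, rfl, hs⟩
      exact five_le_card s (by rw [hs, hI, span_gens_eq])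
  · have : Algebra.IsIntegral ℚ (MvPolynomial (Fin 3) ℚ ⧸ I) := by
      constructor
      intro a
      obtain ⟨f, rfl⟩ := Ideal.Quotient.mk_surjective a
      induction f using MvPolynomial.induction_on with
      | C c => exact isIntegral_algebraMap (R := ℚ) (A := MvPolynomial (Fin 3) ℚ ⧸ I) (x := c)
      | add f g hf hg => rw [map_add]; exact hf.add hg
      | mul_X f i hf =>
        rw [map_mul]
        refine hf.mul (IsIntegral.of_pow (n := 3) (by norm_num) ?_)
        rw [← map_pow, Ideal.Quotient.eq_zero_iff_mem.2 (hX i)]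
        exact isIntegral_zero
    exact Algebra.IsIntegral.finite
end

section
/- Let I be the ideal of R = ℚ[x,y,z] generated by yz, xz, y³, xy² + z³, x²y, x³. Then I has height 3, the minimal number of generators of I is 6, and the quotient ring R/I is a finite-dimensional ℚ-vector space. -/
/-! The ideal contains `x^3`, `y^3` and `z^4`, so the origin `(x, y, z)` is the only prime above it:
the quotient is integral and of finite type over `ℚ`, hence finite, and the height is that of
`(x, y, z)`, which the chain `0 < (x) < (x, y) < (x, y, z)` and `dim ℚ[x, y, z] = 3` identify as `3`.

For the number of generators, the seven monomials occurring in the generators form an antichain for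
divisibility. Hence taking the coefficients at six of them (one for each generator) gives a
`ℚ`-linear map `leadCoeffs : R → ℚ⁶` with `leadCoeffs (r * f) = r(0) • leadCoeffs f` for `f ∈ I`
(it factors through `I / (x, y, z) I`), and it sends the generators to the standard basis. So the
image of any generating set of `I` spans `ℚ⁶`. -/

open MvPolynomial

/-- The six given generators of the ideal. -/
noncomputable def gen : Fin 6 → MvPolynomial (Fin 3) ℚ :=
  ![y*z, x*z, y^3, x*y^2 + z^3, x^2*y, x^3]

/-- Exponents of the seven monomials occurring in the generators; for `i < 6` the monomial with
index `i` occurs in `gen i` only, and the last one is `z^3`. -/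
noncomputable def expo (i : Fin 7) : Fin 3 →₀ ℕ :=
  Finsupp.equivFunOnFinite.symm
    ((![![0,1,1], ![1,0,1], ![0,3,0], ![1,2,0], ![2,1,0], ![3,0,0], ![0,0,3]] :
      Fin 7 → Fin 3 → ℕ) i)

lemma expo_antichain (i j : Fin 7) (h : expo i ≤ expo j) : i = j := by
  have h' : ∀ k, expo i k ≤ expo j k := h
  simp only [expo, Finsupp.equivFunOnFinite_symm_apply_apply] at h'
  clear h
  revert i j
  decide

lemma monomial_expo (i : Fin 7) :
    (monomial (expo i) 1 : MvPolynomial (Fin 3) ℚ) = X 0 ^ expo i 0 * X 1 ^ expo i 1 *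
      X 2 ^ expo i 2 := by
  rw [monomial_eq, Finsupp.prod_fintype _ _ (by simp), Fin.prod_univ_three]
  simp

/-- Each generator is the monomial of its index, plus `z^3` for `gen 3`. -/
lemma gen_eq (i : Fin 6) :
    gen i = monomial (expo i.castSucc) 1 + if i = 3 then monomial (expo 6) 1 else 0 := by
  simp only [monomial_expo]
  fin_cases i <;> simp [gen, expo]

/-- The coefficients at the first six monomials. -/
noncomputable def leadCoeffs : MvPolynomial (Fin 3) ℚ →ₗ[ℚ] (Fin 6 → ℚ) :=
  LinearMap.pi fun i => lcoeff ℚ (expo i.castSucc)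

lemma leadCoeffs_apply (f : MvPolynomial (Fin 3) ℚ) (i : Fin 6) :
    leadCoeffs f i = coeff (expo i.castSucc) f := rfl

lemma expo_eq_iff (i j : Fin 7) : expo i = expo j ↔ i = j :=
  ⟨fun h => expo_antichain i j h.le, fun h => h ▸ rfl⟩

lemma leadCoeffs_gen (i : Fin 6) : leadCoeffs (gen i) = Pi.single i 1 := by
  ext j
  rw [leadCoeffs_apply, gen_eq, coeff_add, coeff_monomial, Pi.single_apply]
  have h6 : (6 : Fin 7) ≠ j.castSucc := by
    rw [Ne, Fin.ext_iff]
    exact j.isLt.ne'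
  have hz : coeff (expo j.castSucc)
      (if i = 3 then monomial (expo 6) (1 : ℚ) else 0) = 0 := by
    split_ifs <;> simp [coeff_monomial, expo_eq_iff, h6]
  simp [hz, expo_eq_iff, eq_comm]

lemma gen_injective : Function.Injective gen := by
  intro i j h
  have := congrArg leadCoeffs h
  rw [leadCoeffs_gen, leadCoeffs_gen] at this
  by_contra hij
  simpa [hij] using congrFun this i

/-- Elements of the ideal have no monomial strictly dividing one of the seven. -/
lemma coeff_eq_zero {f : MvPolynomial (Fin 3) ℚ} (hf : f ∈ Ideal.span (Set.range gen))
    {b : Fin 3 →₀ ℕ} {i : Fin 7} (hb : b < expo i) : coeff b f = 0 := by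
  have hle : Ideal.span (Set.range gen) ≤
      Ideal.span ((fun s => monomial s (1 : ℚ)) '' Set.range expo) := by
    have hmem (i : Fin 7) : monomial (expo i) (1 : ℚ) ∈
        Ideal.span ((fun s => monomial s (1 : ℚ)) '' Set.range expo) :=
      Ideal.subset_span ⟨_, ⟨i, rfl⟩, rfl⟩
    rw [Ideal.span_le]
    rintro _ ⟨i, rfl⟩
    rw [gen_eq]
    refine Ideal.add_mem _ (hmem _) ?_
    split_ifs
    exacts [hmem _, Ideal.zero_mem _]
  by_contra h
  obtain ⟨_, ⟨j, rfl⟩, hj⟩ :=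
    mem_ideal_span_monomial_image.mp (hle hf) b (mem_support_iff.mpr h)
  obtain rfl := expo_antichain j i (hj.trans hb.le)
  exact absurd hb hj.not_gt

lemma leadCoeffs_mul (r : MvPolynomial (Fin 3) ℚ) {f : MvPolynomial (Fin 3) ℚ}
    (hf : f ∈ Ideal.span (Set.range gen)) :
    leadCoeffs (r * f) = coeff 0 r • leadCoeffs f := by
  ext i
  rw [Pi.smul_apply, leadCoeffs_apply, leadCoeffs_apply, coeff_mul, smul_eq_mul]
  refine Finset.sum_eq_single (0, expo i.castSucc) ?_ (by simp)
  rintro ⟨a, b⟩ hab hne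
  rw [Finset.HasAntidiagonal.mem_antidiagonal] at hab
  have hab' : a + b = expo i.castSucc := hab
  have hb : b < expo i.castSucc := by
    refine lt_of_le_of_ne (hab' ▸ le_add_self) ?_
    rintro rfl
    exact hne (by simpa using hab')
  rw [coeff_eq_zero hf hb, mul_zero]

lemma six_le_card {s : Finset (MvPolynomial (Fin 3) ℚ)}
    (hs : Ideal.span (s : Set (MvPolynomial (Fin 3) ℚ)) = Ideal.span (Set.range gen)) :
    6 ≤ s.card := by
  classical
  have key : ∀ f ∈ Ideal.span (s : Set (MvPolynomial (Fin 3) ℚ)),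
      leadCoeffs f ∈ Submodule.span ℚ ((s.image leadCoeffs : Finset _) : Set (Fin 6 → ℚ)) := by
    intro f hf
    induction hf using Submodule.span_induction with
    | mem f hf =>
      exact Submodule.subset_span (Finset.mem_coe.mpr (Finset.mem_image_of_mem _ hf))
    | zero => simp
    | add f g _ _ hf hg => rw [map_add]; exact Submodule.add_mem _ hf hg
    | smul r f hf ih =>
      rw [smul_eq_mul, leadCoeffs_mul r (hs ▸ hf)]
      exact Submodule.smul_mem _ _ ih
  have htop : Submodule.span ℚ ((s.image leadCoeffs : Finset _) : Set (Fin 6 → ℚ)) = ⊤ := by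
    rw [eq_top_iff, ← (Pi.basisFun ℚ (Fin 6)).span_eq, Submodule.span_le]
    rintro _ ⟨i, rfl⟩
    rw [Pi.basisFun_apply, ← leadCoeffs_gen]
    exact key _ (hs ▸ Ideal.subset_span ⟨i, rfl⟩)
  have h := finrank_span_finset_le_card (R := ℚ) (s.image leadCoeffs)
  rw [Set.finrank, htop, finrank_top, Module.finrank_fin_fun] at h
  exact h.trans Finset.card_image_le

lemma minNumGens_span : minNumGens (Ideal.span (Set.range gen)) = 6 := by
  classical
  have h6 : 6 ∈ {n : ℕ | ∃ s : Finset (MvPolynomial (Fin 3) ℚ), s.card = n ∧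
      Ideal.span (s : Set (MvPolynomial (Fin 3) ℚ)) = Ideal.span (Set.range gen)} :=
    ⟨Finset.univ.image gen, by simp [Finset.card_image_of_injective _ gen_injective], by simp⟩
  refine le_antisymm (Nat.sInf_le h6) (le_csInf ⟨6, h6⟩ ?_)
  rintro _ ⟨s, rfl, hs⟩
  exact six_le_card hs

lemma X_pow_four_mem (i : Fin 3) : (X i : MvPolynomial (Fin 3) ℚ) ^ 4 ∈
    Ideal.span (Set.range gen) := by
  have hg (j : Fin 6) : gen j ∈ Ideal.span (Set.range gen) := Ideal.subset_span ⟨j, rfl⟩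
  fin_cases i
  · have := Ideal.mul_mem_left _ x (hg 5)
    convert this using 1
    simp [gen]; ring
  · have := Ideal.mul_mem_left _ y (hg 2)
    convert this using 1
    simp [gen]; ring
  · have := Ideal.sub_mem _ (Ideal.mul_mem_left _ z (hg 3)) (Ideal.mul_mem_left _ (y^2) (hg 1))
    convert this using 1
    simp [gen]; ring

lemma finite_quotient :
    FiniteDimensional ℚ (MvPolynomial (Fin 3) ℚ ⧸ Ideal.span (Set.range gen)) := by
  have hint : Algebra.IsIntegral ℚ (MvPolynomial (Fin 3) ℚ ⧸ Ideal.span (Set.range gen)) := by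
    refine ⟨fun q => ?_⟩
    obtain ⟨f, rfl⟩ := Ideal.Quotient.mk_surjective q
    induction f using MvPolynomial.induction_on with
    | C a => exact isIntegral_algebraMap (R := ℚ) (x := a)
    | add p q hp hq => rw [map_add]; exact hp.add hq
    | mul_X p i hp =>
      rw [map_mul]
      refine hp.mul (IsIntegral.of_pow (n := 4) (by norm_num) ?_)
      rw [← map_pow, Ideal.Quotient.eq_zero_iff_mem.mpr (X_pow_four_mem i)]
      exact isIntegral_zero
  exact Algebra.IsIntegral.finite

/-- The endomorphism of `ℚ[x, y, z]` setting the first `k` variables to zero. -/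
noncomputable def killVars (k : ℕ) : MvPolynomial (Fin 3) ℚ →ₐ[ℚ] MvPolynomial (Fin 3) ℚ :=
  aeval fun i => if i.val < k then 0 else X i

/-- The prime ideal generated by the first `k` variables, realised as a kernel. -/
noncomputable def coordPrime (k : ℕ) : PrimeSpectrum (MvPolynomial (Fin 3) ℚ) :=
  ⟨RingHom.ker (killVars k), RingHom.ker_isPrime _⟩

lemma coordPrime_lt (k : Fin 3) : coordPrime k < coordPrime (k + 1) := by
  rw [← PrimeSpectrum.asIdeal_lt_asIdeal]
  refine lt_of_le_not_ge (fun f hf => ?_) fun h => ?_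
  · have hcomp : (killVars (k + 1)).comp (killVars k) = killVars (k + 1) := by
      refine MvPolynomial.algHom_ext fun i => ?_
      simp only [killVars, AlgHom.comp_apply, aeval_X]
      split_ifs <;> simp_all <;> omega
    have hf' : killVars k f = 0 := hf
    change killVars (k + 1) f = 0
    rw [← hcomp, AlgHom.comp_apply, hf', map_zero]
  · have h1 : X k ∈ (coordPrime (k + 1)).asIdeal := by
      change killVars (k + 1) (X k) = 0
      simp [killVars]
    have h2 : killVars k (X k) = 0 := h h1
    simp [killVars] at h2

lemma three_le_height : 3 ≤ Order.height (coordPrime 3) := by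
  let c : LTSeries (PrimeSpectrum (MvPolynomial (Fin 3) ℚ)) :=
    ⟨3, fun i => coordPrime i, fun i => coordPrime_lt i⟩
  exact Order.length_le_height_last (p := c)

lemma height_le_three (p : PrimeSpectrum (MvPolynomial (Fin 3) ℚ)) : Order.height p ≤ 3 := by
  have h := Order.height_le_krullDim p
  change _ ≤ ringKrullDim (MvPolynomial (Fin 3) ℚ) at h
  rw [MvPolynomial.ringKrullDim_of_isNoetherianRing, ringKrullDim_eq_zero_of_field] at h
  simp only [Nat.card_eq_fintype_card, Fintype.card_fin, zero_add] at h
  exact WithBot.coe_le_coe.mp h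

lemma coordPrime_le {p : PrimeSpectrum (MvPolynomial (Fin 3) ℚ)}
    (hp : Ideal.span (Set.range gen) ≤ p.asIdeal) : coordPrime 3 ≤ p := by
  intro f hf
  have hX (i : Fin 3) : (X i : MvPolynomial (Fin 3) ℚ) ∈ p.asIdeal :=
    p.2.mem_of_pow_mem 4 (hp (X_pow_four_mem i))
  -- Modulo `p`, setting all variables to zero changes nothing.
  have hcomp : (Ideal.Quotient.mkₐ ℚ p.asIdeal).comp (killVars 3) =
      Ideal.Quotient.mkₐ ℚ p.asIdeal := by
    refine MvPolynomial.algHom_ext fun i => ?_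
    simp [killVars, (Ideal.Quotient.eq_zero_iff_mem.mpr (hX i))]
  have hf' : killVars 3 f = 0 := hf
  have := DFunLike.congr_fun hcomp f
  rw [AlgHom.comp_apply, hf', map_zero] at this
  exact Ideal.Quotient.eq_zero_iff_mem.mp this.symm

lemma le_coordPrime : Ideal.span (Set.range gen) ≤ (coordPrime 3).asIdeal := by
  rw [Ideal.span_le]
  rintro _ ⟨i, rfl⟩
  change killVars 3 (gen i) = 0
  fin_cases i <;> simp [gen, killVars]

lemma idealHeight_span : idealHeight (Ideal.span (Set.range gen)) = 3 :=
  le_antisymm ((iInf₂_le (coordPrime 3) le_coordPrime).trans (height_le_three _))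
    (le_iInf₂ fun _ hp => three_le_height.trans (Order.height_mono (coordPrime_le hp)))

theorem stmt_5 (I : Ideal (MvPolynomial (Fin 3) ℚ))
    (hI : I = Ideal.span {y*z, x*z, y^3, x*y^2 + z^3, x^2*y, x^3}) :
    idealHeight I = 3 ∧ minNumGens I = 6 ∧
    FiniteDimensional ℚ (MvPolynomial (Fin 3) ℚ ⧸ I) := by
  have h : I = Ideal.span (Set.range gen) := by
    rw [hI, gen]
    simp only [Matrix.range_cons, Matrix.range_empty, Set.union_empty, Set.singleton_union]
  subst h
  exact ⟨idealHeight_span, minNumGens_span, finite_quotient⟩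
end
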